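/- arXiv:2508.11612 — 5 statements merged into one kernel-verified Lean document; each statement's English description precedes it below -/
import Mathlib

section
/- Minimum-energy ellipse attainment: for any p₀, p_f ∈ ℝ³ with p₀ ≠ p_f, setting a_min = ¼(‖p₀‖ + ‖p_f‖ + ‖p₀ − p_f‖), there exists F ∈ ℝ³ lying on the segment from p₀ to p_f such that ‖p₀‖ + ‖p₀ − F‖ = 2 a_min and ‖p_f‖ + ‖p_f − F‖ = 2 a_min; hence a_min is the smallest semi-major axis of an ellipse with one focus at the origin passing through both p₀ and p_f. -/
/-- Minimum-energy ellipse attainment. For any `p₀ ≠ p_f` in ℝ³, setting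
`a_min = ¼(‖p₀‖ + ‖p_f‖ + ‖p₀ − p_f‖)`, there exists `F` on the segment from `p₀` to
`p_f` such that `‖p₀‖ + ‖p₀ − F‖ = 2 a_min` and `‖p_f‖ + ‖p_f − F‖ = 2 a_min`; hence
`a_min` is the smallest semi-major axis of an ellipse with one focus at the origin
passing through both `p₀` and `p_f`. -/
theorem min_energy_ellipse_attained
    (p₀ p_f : EuclideanSpace ℝ (Fin 3)) (hne : p₀ ≠ p_f)
    (a_min : ℝ) (ha : a_min = (1/4) * (‖p₀‖ + ‖p_f‖ + ‖p₀ - p_f‖)) :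
    ∃ F ∈ segment ℝ p₀ p_f,
      ‖p₀‖ + ‖p₀ - F‖ = 2 * a_min ∧ ‖p_f‖ + ‖p_f - F‖ = 2 * a_min := by
  have hd : 0 < ‖p₀ - p_f‖ := norm_pos_iff.2 (sub_ne_zero.2 hne)
  have h1 : ‖p₀‖ - ‖p_f‖ ≤ ‖p₀ - p_f‖ := norm_sub_norm_le p₀ p_f
  have h2 : ‖p_f‖ - ‖p₀‖ ≤ ‖p₀ - p_f‖ := norm_sub_rev p_f p₀ ▸ norm_sub_norm_le p_f p₀
  -- The first focal sum forces `F` to lie at distance `2 * a_min - ‖p₀‖` from `p₀`. The second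
  -- then holds because the distances from `F` to the two endpoints add up to `‖p₀ - p_f‖`.
  -- The triangle inequalities `h1` and `h2` say exactly that this point is on the segment.
  obtain ⟨t, ht⟩ : ∃ t, t = (‖p₀ - p_f‖ + ‖p_f‖ - ‖p₀‖) / (2 * ‖p₀ - p_f‖) := ⟨_, rfl⟩
  have ht0 : 0 ≤ t := ht ▸ div_nonneg (by linarith) (by linarith)
  have ht1 : t ≤ 1 := ht ▸ (div_le_one (by linarith)).2 (by linarith)
  have htd : t * ‖p₀ - p_f‖ = (‖p₀ - p_f‖ + ‖p_f‖ - ‖p₀‖) / 2 := by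
    rw [ht]; field_simp
  refine ⟨(1 - t) • p₀ + t • p_f, ⟨1 - t, t, by linarith, ht0, by ring, rfl⟩, ?_, ?_⟩
  · have e : p₀ - ((1 - t) • p₀ + t • p_f) = t • (p₀ - p_f) := by module
    rw [e, norm_smul, Real.norm_of_nonneg ht0]
    linarith
  · have e : p_f - ((1 - t) • p₀ + t • p_f) = (1 - t) • (p_f - p₀) := by module
    rw [e, norm_smul, Real.norm_of_nonneg (by linarith), norm_sub_rev p_f p₀]
    linarith
end

section
/- Theorem (Jacobi/Maupertuis, one direction): let q : I → ℝⁿ be an Euler–Lagrange trajectory of the natural Lagrangian system with constant energy E (½ q'ᵀ Q(q) q' + V(q) ≡ E), with q'(t) ≠ 0 and E > V(q(t)) for all t ∈ I. Let 𝒢(x) = 2(E − V(x)) Q(x) be the Jacobi metric, let σ(t) = ∫_{t₀}^{t} √(q'(τ)ᵀ 𝒢(q(τ)) q'(τ)) dτ be the Jacobi arc length, and let γ = q ∘ σ⁻¹. Then γ satisfies the geodesic equation of 𝒢 in coordinates: for each k, γ''ᵏ(s) + Σ_{i,j} Γᵏᵢⱼ(γ(s)) γ'ⁱ(s) γ'ʲ(s)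 = 0, where Γᵏᵢⱼ = ½ Σ_l (𝒢⁻¹)ᵏˡ (∂g_{li}/∂xⱼ + ∂g_{lj}/∂xᵢ − ∂g_{ij}/∂x_l) are the Christoffel symbols of 𝒢 = (g_{ij}). -/
/-!
Conservation of energy gives `q'ᵀ Q q' = 2 f` along the trajectory, with `f = E - V ∘ q > 0`, so the
Jacobi speed `√(q'ᵀ 𝒢 q')` is `2 f` and `σ' = 2 f`. By the inverse function theorem,
`hasDerivAt_of_comp_eq`, differentiation of `γ` at `σ t` is `(2 f)⁻¹ d/dt`; applied twice to
`γ ∘ σ = q` it gives `γ' = q' / (2 f)` and `γ'' = (q'' + (dV(q') / f) q') / (2 f)²`.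

It remains to see that `∑ Γᵏᵢⱼ q'ⁱ q'ʲ = -(q'' + (dV(q') / f) q')ᵏ`, which is
`christoffel_contraction`. After lowering the index with `𝒢 = 2 f Q`, the terms of `∂𝒢` with `∂Q`
are those of the Euler–Lagrange equation multiplied by `2 f`; of the terms with `∂V`, the one along
the gradient becomes `2 f ∂V` by the energy identity and supplies the force, and the other two
combine to `-2 dV(q') Q q'`, the term due to the reparametrization.
-/

open Matrix Set

attribute [local instance] Matrix.normedAddCommGroup Matrix.normedSpace

/-- If `F ∘ σ = G` near `t` and `σ` is strictly differentiable at `t` with nonzero derivative, then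
the derivative of `F` at `σ t` is that of `G` at `t`, divided by that of `σ`. -/
theorem hasDerivAt_of_comp_eq {W : Type*} [NormedAddCommGroup W] [NormedSpace ℝ W]
    {σ : ℝ → ℝ} {F G : ℝ → W} {c t : ℝ} {G' : W} (hσ : HasStrictDerivAt σ c t) (hc : c ≠ 0)
    (hFG : ∀ᶠ τ in nhds t, F (σ τ) = G τ) (hG : HasDerivAt G G' t) :
    HasDerivAt F (c⁻¹ • G') (σ t) := by
  set g := hσ.localInverse σ c t hc with hg
  have hgd : HasStrictDerivAt g c⁻¹ (σ t) := hσ.to_localInverse hc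
  have hgt : g (σ t) = t := HasStrictFDerivAt.localInverse_apply_image _
  have hright : ∀ᶠ y in nhds (σ t), σ (g y) = y :=
    HasStrictFDerivAt.eventually_right_inverse _
  have hcont : Filter.Tendsto g (nhds (σ t)) (nhds t) := by
    have := hgd.hasDerivAt.continuousAt.tendsto
    rwa [hgt] at this
  have hcomp : HasDerivAt (G ∘ g) (c⁻¹ • G') (σ t) :=
    HasDerivAt.scomp (σ t) (by rwa [hgt]) hgd.hasDerivAt
  refine hcomp.congr_of_eventuallyEq ?_
  filter_upwards [hright, hcont.eventually hFG] with y hy hy'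
  rw [Function.comp_apply, ← hy', hy]

/-- Evaluation of the Fréchet derivative commutes with taking a matrix entry. -/
theorem hasFDerivAt_entry {n : ℕ} {X : Type*} [NormedAddCommGroup X] [NormedSpace ℝ X]
    {M : X → Matrix (Fin n) (Fin n) ℝ} {x : X} (hM : DifferentiableAt ℝ M x) (i j : Fin n) :
    ∃ L : X →L[ℝ] ℝ, HasFDerivAt (fun y => M y i j) L x ∧ ∀ v, L v = fderiv ℝ M x v i j := by
  let e : Matrix (Fin n) (Fin n) ℝ →L[ℝ] ℝ :=
    LinearMap.toContinuousLinearMap (Matrix.entryLinearMap ℝ ℝ i j)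
  exact ⟨e.comp (fderiv ℝ M x), e.hasFDerivAt.comp x hM.hasFDerivAt, fun v => rfl⟩

theorem clm_eq_sum_single {n : ℕ} {W : Type*} [NormedAddCommGroup W] [NormedSpace ℝ W]
    (L : (Fin n → ℝ) →L[ℝ] W) (v : Fin n → ℝ) :
    L v = ∑ m, v m • L (Pi.single m 1) := by
  conv_lhs => rw [pi_eq_sum_univ' v]
  simp only [map_sum, map_smul]

/-- The pointwise algebra behind the theorem. At one point, `A` is the kinetic matrix `Q`, `dQ m` and
`dV m` are the partial derivatives of `Q` and `V`, `f = E - V`, and `v`, `u` are the velocity and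
acceleration. The Euler–Lagrange equation and the energy identity `vᵀ A v = 2 f` turn the
Christoffel contraction of `2 (E - V) Q` in the direction `v` into `-(u + (dV·v / f) v)`. -/
theorem christoffel_contraction {n : ℕ} (A G : Matrix (Fin n) (Fin n) ℝ)
    (dQ : Fin n → Matrix (Fin n) (Fin n) ℝ) (dV v u : Fin n → ℝ) (f : ℝ) (hf : f ≠ 0)
    (hG : G * ((2 * f) • A) = 1)
    (hEL : ∀ l, ∑ j, ((∑ m, v m * dQ m l j) * v j + A l j * u j)
      = (1/2) * (v ⬝ᵥ dQ l *ᵥ v) - dV l)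
    (hE : v ⬝ᵥ A *ᵥ v = 2 * f) (k : Fin n) :
    ∑ i, ∑ j, ((1/2) * ∑ l, G k l *
      ((2 * f * dQ j l i - 2 * dV j * A l i) + (2 * f * dQ i l j - 2 * dV i * A l j)
        - (2 * f * dQ l i j - 2 * dV l * A i j))) * v i * v j
      = -(u k + (dV ⬝ᵥ v) / f * v k) := by
  set R : Fin n → ℝ := fun l => ∑ i, ∑ j, (1/2) *
      ((2 * f * dQ j l i - 2 * dV j * A l i) + (2 * f * dQ i l j - 2 * dV i * A l j)
        - (2 * f * dQ l i j - 2 * dV l * A i j)) * v i * v j with hR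
  have hRl : R = -(((2 * f) • A) *ᵥ (u + ((dV ⬝ᵥ v) / f) • v)) := by
    funext l
    have h1 := hEL l
    have e1 : ∑ i, ∑ j, dQ j l i * v i * v j = ∑ j, (∑ m, v m * dQ m l j) * v j := by
      refine Finset.sum_congr rfl fun i _ => ?_
      rw [Finset.sum_mul]
      exact Finset.sum_congr rfl fun j _ => by ring
    have e2 : ∑ i, ∑ j, dQ i l j * v i * v j = ∑ j, (∑ m, v m * dQ m l j) * v j := by
      rw [← e1, Finset.sum_comm]
      exact Finset.sum_congr rfl fun i _ => Finset.sum_congr rfl fun j _ => by ring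
    have e3 : ∑ i, ∑ j, dV j * A l i * v i * v j = (dV ⬝ᵥ v) * (A *ᵥ v) l := by
      simp only [dotProduct, mulVec]
      rw [mul_comm, Finset.sum_mul_sum]
      exact Finset.sum_congr rfl fun i _ => Finset.sum_congr rfl fun j _ => by ring
    have e4 : ∑ i, ∑ j, dV i * A l j * v i * v j = (dV ⬝ᵥ v) * (A *ᵥ v) l := by
      rw [← e3, Finset.sum_comm]
      exact Finset.sum_congr rfl fun i _ => Finset.sum_congr rfl fun j _ => by ring
    have e5 : ∀ B : Matrix (Fin n) (Fin n) ℝ, ∑ i, ∑ j, B i j * v i * v j = v ⬝ᵥ B *ᵥ v := by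
      intro B
      simp only [dotProduct, mulVec, Finset.mul_sum]
      exact Finset.sum_congr rfl fun i _ => Finset.sum_congr rfl fun j _ => by ring
    have hsplit : R l = f * ∑ i, ∑ j, dQ j l i * v i * v j
        - ∑ i, ∑ j, dV j * A l i * v i * v j
        + f * ∑ i, ∑ j, dQ i l j * v i * v j - ∑ i, ∑ j, dV i * A l j * v i * v j
        - f * ∑ i, ∑ j, dQ l i j * v i * v j + dV l * ∑ i, ∑ j, A i j * v i * v j := by
      simp only [hR, Finset.mul_sum, ← Finset.sum_add_distrib, ← Finset.sum_sub_distrib]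
      exact Finset.sum_congr rfl fun i _ => Finset.sum_congr rfl fun j _ => by ring
    rw [Finset.sum_add_distrib] at h1
    have hAu : ∑ j, A l j * u j = (A *ᵥ u) l := rfl
    rw [hsplit, e1, e2, e3, e4, e5, e5, hE]
    simp only [Pi.neg_apply, smul_mulVec, mulVec_add, mulVec_smul, Pi.add_apply, Pi.smul_apply,
      smul_eq_mul]
    rw [hAu] at h1
    field_simp
    linear_combination (2 * f) * h1
  have hsum : ∑ i, ∑ j, ((1/2) * ∑ l, G k l *
      ((2 * f * dQ j l i - 2 * dV j * A l i) + (2 * f * dQ i l j - 2 * dV i * A l j)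
        - (2 * f * dQ l i j - 2 * dV l * A i j))) * v i * v j = (G *ᵥ R) k := by
    simp only [mulVec, dotProduct, hR, Finset.mul_sum, Finset.sum_mul]
    rw [Finset.sum_comm' (t' := Finset.univ) (s' := fun _ => Finset.univ) (by simp)]
    rw [Finset.sum_comm]
    conv_rhs => rw [Finset.sum_comm]
    refine Finset.sum_congr rfl fun i _ => ?_
    conv_rhs => rw [Finset.sum_comm]
    exact Finset.sum_congr rfl fun j _ => Finset.sum_congr rfl fun l _ => by ring
  rw [hsum, hRl, mulVec_neg, mulVec_mulVec, hG, one_mulVec]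
  simp

/-- Jacobi/Maupertuis, one direction: let `q : I → ℝⁿ` be an
Euler–Lagrange trajectory of the natural Lagrangian system `L = ½ q̇ᵀ Q(q) q̇ − V(q)`
with constant energy `E`, with `q'(t) ≠ 0` and `E > V(q(t))` on `I`. Let
`𝒢(x) = 2(E − V(x)) Q(x)` be the Jacobi metric, `σ` the Jacobi arc length, and
`γ = q ∘ σ⁻¹` (encoded by `γ (σ t) = q t` on `I`). Then `γ` satisfies the geodesic
equation of `𝒢` in coordinates, with `Γ` the Christoffel symbols of `𝒢`. -/
theorem jacobi_maupertuis_geodesic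
    (n : ℕ)
    (Q : (Fin n → ℝ) → Matrix (Fin n) (Fin n) ℝ)
    (hQsmooth : ContDiff ℝ 2 Q)
    (hQsymm : ∀ x, (Q x).IsSymm)
    (hQpos : ∀ x, (Q x).PosDef)
    (V : (Fin n → ℝ) → ℝ) (hV : ContDiff ℝ 2 V)
    (a b : ℝ) (t₀ : ℝ) (ht₀ : t₀ ∈ Ioo a b)
    (q : ℝ → (Fin n → ℝ))
    (hq : ContDiffOn ℝ 2 q (Ioo a b))
    -- Euler–Lagrange equations
    (hEL : ∀ i : Fin n, ∀ t ∈ Ioo a b,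
        deriv (fun τ => ((Q (q τ)) *ᵥ deriv q τ) i) t
          = (1/2) * (deriv q t ⬝ᵥ (fderiv ℝ Q (q t) (Pi.single i 1)) *ᵥ deriv q t)
            - fderiv ℝ V (q t) (Pi.single i 1))
    (E : ℝ)
    -- constant energy E
    (henergy : ∀ t ∈ Ioo a b,
        (1/2) * (deriv q t ⬝ᵥ (Q (q t)) *ᵥ deriv q t) + V (q t) = E)
    (hq' : ∀ t ∈ Ioo a b, deriv q t ≠ 0)
    (hEV : ∀ t ∈ Ioo a b, V (q t) < E)
    -- Jacobi metric
    (𝒢 : (Fin n → ℝ) → Matrix (Fin n) (Fin n) ℝ)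
    (h𝒢 : ∀ x, 𝒢 x = (2 * (E - V x)) • Q x)
    -- Christoffel symbols of the Jacobi metric
    (Γ : Fin n → Fin n → Fin n → (Fin n → ℝ) → ℝ)
    (hΓ : ∀ k i j x, Γ k i j x = (1/2) * ∑ l : Fin n, (𝒢 x)⁻¹ k l *
        (fderiv ℝ (fun y => 𝒢 y l i) x (Pi.single j 1)
          + fderiv ℝ (fun y => 𝒢 y l j) x (Pi.single i 1)
          - fderiv ℝ (fun y => 𝒢 y i j) x (Pi.single l 1)))
    -- Jacobi arc length
    (σ : ℝ → ℝ)
    (hσ : ∀ t, σ t = ∫ τ in t₀..t,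
        Real.sqrt (deriv q τ ⬝ᵥ (𝒢 (q τ)) *ᵥ deriv q τ))
    -- γ = q ∘ σ⁻¹
    (γ : ℝ → (Fin n → ℝ))
    (hγ : ∀ t ∈ Ioo a b, γ (σ t) = q t) :
    ∀ t ∈ Ioo a b, ∀ k : Fin n,
      deriv (deriv γ) (σ t) k
        + ∑ i : Fin n, ∑ j : Fin n,
            Γ k i j (γ (σ t)) * deriv γ (σ t) i * deriv γ (σ t) j = 0 := by
  have hVd : ∀ x, HasFDerivAt V (fderiv ℝ V x) x := fun x =>
    (hV.differentiable (by norm_num) x).hasFDerivAt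
  have hQd : ∀ x, DifferentiableAt ℝ Q x := fun x => hQsmooth.differentiable (by norm_num) x
  have hnhds : ∀ t ∈ Ioo a b, Ioo a b ∈ nhds t := fun t ht => isOpen_Ioo.mem_nhds ht
  have hqd : ∀ t ∈ Ioo a b, HasDerivAt q (deriv q t) t := fun t ht =>
    ((hq.differentiableOn (by norm_num)).differentiableAt (hnhds t ht)).hasDerivAt
  have hq1 : ContDiffOn ℝ 1 (deriv q) (Ioo a b) :=
    hq.deriv_of_isOpen isOpen_Ioo (by norm_num)
  have hqdd : ∀ t ∈ Ioo a b, HasDerivAt (deriv q) (deriv (deriv q) t) t := fun t ht =>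
    ((hq1.differentiableOn (by norm_num)).differentiableAt (hnhds t ht)).hasDerivAt
  have hkin : ∀ t ∈ Ioo a b, deriv q t ⬝ᵥ Q (q t) *ᵥ deriv q t = 2 * (E - V (q t)) :=
    fun t ht => by linarith [henergy t ht]
  -- The Jacobi speed is `√((2f)²) = 2f` with `f = E - V ∘ q`, by conservation of energy.
  have hspeed : ∀ t ∈ Ioo a b, Real.sqrt (deriv q t ⬝ᵥ (𝒢 (q t)) *ᵥ deriv q t)
      = 2 * (E - V (q t)) := by
    intro t ht
    rw [h𝒢, smul_mulVec, dotProduct_smul, hkin t ht, smul_eq_mul]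
    exact Real.sqrt_mul_self (by linarith [hEV t ht])
  have hcont : ContinuousOn (fun τ => Real.sqrt (deriv q τ ⬝ᵥ (𝒢 (q τ)) *ᵥ deriv q τ))
      (Ioo a b) := by
    have h : ContinuousOn (fun τ => 2 * (E - V (q τ))) (Ioo a b) :=
      continuousOn_const.mul (continuousOn_const.sub
        (hV.continuous.comp_continuousOn hq.continuousOn))
    exact h.congr hspeed
  have hσd : ∀ t ∈ Ioo a b, HasStrictDerivAt σ (2 * (E - V (q t))) t := by
    intro t ht
    rw [← hspeed t ht, funext hσ]
    refine intervalIntegral.integral_hasStrictDerivAt_right ?_ ?_ (hcont.continuousAt (hnhds t ht))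
    · exact (hcont.mono ((ordConnected_Ioo).uIcc_subset ht₀ ht)).intervalIntegrable
    · exact hcont.stronglyMeasurableAtFilter isOpen_Ioo t ht
  have hpos : ∀ t ∈ Ioo a b, 2 * (E - V (q t)) ≠ 0 := fun t ht => by
    have := hEV t ht
    exact (by linarith : 0 < 2 * (E - V (q t))).ne'
  have hγ1 : ∀ t ∈ Ioo a b, deriv γ (σ t) = (2 * (E - V (q t)))⁻¹ • deriv q t := fun t ht =>
    (hasDerivAt_of_comp_eq (hσd t ht) (hpos t ht)
      (Filter.eventually_of_mem (hnhds t ht) hγ) (hqd t ht)).deriv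
  intro t ht k
  set x := q t with hx
  set v := deriv q t with hv
  set u := deriv (deriv q) t with hu
  set f := E - V x with hf
  have hf0 : f ≠ 0 := fun h => hpos t ht (by rw [← hx, ← hf, h, mul_zero])
  set dQ : Fin n → Matrix (Fin n) (Fin n) ℝ := fun m => fderiv ℝ Q x (Pi.single m 1) with hdQ
  set dV : Fin n → ℝ := fun m => fderiv ℝ V x (Pi.single m 1) with hdV
  have hdVv : fderiv ℝ V x v = dV ⬝ᵥ v := by
    rw [clm_eq_sum_single]
    exact Finset.sum_congr rfl fun m _ => mul_comm _ _
  have hdQv : ∀ i j, fderiv ℝ Q x v i j = ∑ m, v m * dQ m i j := by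
    intro i j
    obtain ⟨L, -, hLv⟩ := hasFDerivAt_entry (hQd x) i j
    rw [← hLv, clm_eq_sum_single]
    exact Finset.sum_congr rfl fun m _ => by rw [smul_eq_mul, hLv]
  have hγ2 : deriv (deriv γ) (σ t)
      = (2 * f)⁻¹ • ((2 * f)⁻¹ • u + (2 * (dV ⬝ᵥ v) / (2 * f) ^ 2) • v) := by
    have hf' : HasDerivAt (fun τ => 2 * (E - V (q τ))) (-(2 * (dV ⬝ᵥ v))) t := by
      have h := (((hVd x).comp_hasDerivAt t (hqd t ht)).const_sub E).const_mul 2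
      rw [← hv, hdVv] at h
      exact h.congr_deriv (by ring)
    have hG := (hf'.inv (hpos t ht)).smul (hqdd t ht)
    refine (hasDerivAt_of_comp_eq (hσd t ht) (hpos t ht)
      (Filter.eventually_of_mem (hnhds t ht) hγ1) (hG.congr_deriv ?_)).deriv
    simp only [neg_neg]
    rfl
  have hEL' : ∀ l, ∑ j, ((∑ m, v m * dQ m l j) * v j + Q x l j * u j)
      = (1/2) * (v ⬝ᵥ dQ l *ᵥ v) - dV l := by
    intro l
    rw [← hEL l t ht]
    symm
    refine HasDerivAt.deriv ?_
    change HasDerivAt (fun τ => ∑ j, Q (q τ) l j * deriv q τ j) _ t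
    refine HasDerivAt.fun_sum fun j _ => ?_
    obtain ⟨L, hL, hLv⟩ := hasFDerivAt_entry (hQd x) l j
    have h1 : HasDerivAt (fun τ => Q (q τ) l j) (L v) t := hL.comp_hasDerivAt t (hqd t ht)
    rw [hLv, hdQv] at h1
    exact h1.mul (hasDerivAt_pi.1 (hqdd t ht) j)
  have hdG : ∀ i j m, fderiv ℝ (fun y => 𝒢 y i j) x (Pi.single m 1)
      = 2 * f * dQ m i j - 2 * dV m * Q x i j := by
    intro i j m
    obtain ⟨L, hL, hLv⟩ := hasFDerivAt_entry (hQd x) i j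
    have h : HasFDerivAt (fun y => 𝒢 y i j) _ x :=
      ((((hVd x).const_sub E).const_mul 2).mul hL).congr_of_eventuallyEq
        (Filter.Eventually.of_forall fun y => by simp [h𝒢])
    rw [h.fderiv]
    simp [hLv, hdQ, hdV, hf]
    ring
  have hinv : (𝒢 x)⁻¹ * ((2 * f) • Q x) = 1 := by
    rw [h𝒢 x, ← hf]
    refine Matrix.nonsing_inv_mul _ ?_
    rw [Matrix.det_smul]
    exact ((isUnit_iff_ne_zero.2 (hpos t ht)).pow _).mul
      (isUnit_iff_ne_zero.2 (hQpos x).det_pos.ne')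
  have key := christoffel_contraction (Q x) (𝒢 x)⁻¹ dQ dV v u f hf0 hinv hEL' (hkin t ht) k
  have hsum : ∑ i : Fin n, ∑ j : Fin n,
      Γ k i j (γ (σ t)) * deriv γ (σ t) i * deriv γ (σ t) j
      = ((2 * f)⁻¹) ^ 2 * -(u k + (dV ⬝ᵥ v) / f * v k) := by
    rw [← key, hγ t ht, hγ1 t ht, Finset.mul_sum]
    refine Finset.sum_congr rfl fun i _ => ?_
    rw [Finset.mul_sum]
    refine Finset.sum_congr rfl fun j _ => ?_
    rw [hΓ]
    simp only [← hx, hdG, Pi.smul_apply, smul_eq_mul, ← hf, ← hv]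
    ring
  rw [hsum, hγ2]
  simp only [Pi.smul_apply, Pi.add_apply, smul_eq_mul]
  field_simp
  ring
end

section
/- Kepler solutions become geodesics of the Kepler Jacobi metric after reparameterization: let r : I → ℝ³ be a Kepler solution with ½‖r'(t)‖² − μ/‖r(t)‖ = E and r'(t) ≠ 0 for all t ∈ I. Define the Jacobi arc length σ(t) = ∫_{t₀}^{t} 2(E + μ/‖r(τ)‖) dτ and set γ = r ∘ σ⁻¹. Then γ takes values in Ω, has unit Jacobi speed (2(E + μ/‖γ(s)‖) ‖γ'(s)‖² = 1), and satisfies the conformal geodesic equation γ''(s) = ‖γ'(s)‖² ∇φ(γ(s)) − 2 ⟨∇φ(γ(s)), γ'(s)⟩ γ'(s) for all s. -/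
open Set RealInnerProductSpace

/-!
Write `v = r'` and `a = r''`. Conservation of energy reads `2 (E + μ / ‖r‖) = ‖v‖²`, so the Jacobi
arc length satisfies `σ' = ‖v‖² > 0`. The inverse function theorem makes `σ` invertible near each
time, and the relation `γ ∘ σ = r` can be differentiated to give `γ' ∘ σ = ‖v‖⁻² v`, which is the
unit speed property. Differentiating this relation once more gives
`γ'' ∘ σ = ‖v‖⁻² (‖v‖⁻² a - 2 ‖v‖⁻⁴ ⟪v, a⟫ v)`.
On the other side, Newton's equation identifies the gradient of the conformal exponent along the
orbit: `∇φ(r) = -(μ / ‖r‖³) r / (2 (E + μ / ‖r‖)) = ‖v‖⁻² a`. Substituting this in the geodesic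
equation turns its right-hand side into the expression for `γ'' ∘ σ`.

The two differentiations are instances of `hasDerivAt_of_comp_eventuallyEq`; the gradient is
computed in `hasGradientAt_jacobi_exponent`.
-/

open Filter Topology

/-- Differentiation through a local change of parameter: if `γ ∘ σ = h` near `t` and `σ` is a local
diffeomorphism at `t`, then the derivative of `γ` at `σ t` is that of `h` divided by that of `σ`. -/
lemma hasDerivAt_of_comp_eventuallyEq {F : Type*} [NormedAddCommGroup F] [NormedSpace ℝ F]
    {σ : ℝ → ℝ} {γ h : ℝ → F} {c t : ℝ} {h' : F} (hσ : HasStrictDerivAt σ c t) (hc : c ≠ 0)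
    (hh : HasDerivAt h h' t) (hγ : ∀ᶠ x in 𝓝 t, γ (σ x) = h x) :
    HasDerivAt γ (c⁻¹ • h') (σ t) := by
  have hleft := hσ.eventually_left_inverse hc
  have hg := (hσ.to_localInverse hc).hasDerivAt
  have hcomp : HasDerivAt (h ∘ hσ.localInverse σ c t hc) (c⁻¹ • h') (σ t) := by
    refine HasDerivAt.scomp (σ t) ?_ hg
    rwa [hleft.self_of_nhds]
  refine hcomp.congr_of_eventuallyEq ?_
  -- A neighbourhood of `σ t` is the image under `σ` of a neighbourhood of `t`.
  rw [EventuallyEq, ← hσ.map_nhds_eq hc, eventually_map]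
  filter_upwards [hγ, hleft] with x hx hx'
  rw [hx, Function.comp_apply, hx']

lemma hasGradientAt_jacobi_exponent {F : Type*} [NormedAddCommGroup F] [InnerProductSpace ℝ F]
    [CompleteSpace F] (μ E : ℝ) {x : F} (hx : x ≠ 0) (hE : 2 * (E + μ / ‖x‖) ≠ 0) :
    HasGradientAt (fun y : F => (1 / 2) * Real.log (2 * (E + μ / ‖y‖)))
      ((2 * (E + μ / ‖x‖))⁻¹ • (-(μ / ‖x‖ ^ 3) • x)) x := by
  have hx0 : ‖x‖ ≠ 0 := norm_ne_zero_iff.2 hx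
  have hnorm : HasFDerivAt (fun y : F => ‖y‖) (‖x‖⁻¹ • innerSL ℝ x) x := by
    have h := (hasStrictFDerivAt_norm_sq x).hasFDerivAt.sqrt (pow_ne_zero 2 hx0)
    simp only [Real.sqrt_sq (norm_nonneg _)] at h
    convert! h using 1
    ext y
    simp
    field_simp
  have hlog : HasDerivAt (fun u : ℝ => (1 / 2) * Real.log (2 * (E + μ / u)))
      ((1 / 2) * (2 * (μ * (-(‖x‖ ^ 2)⁻¹)) / (2 * (E + μ / ‖x‖)))) ‖x‖ := by
    have h1 : HasDerivAt (fun u : ℝ => 2 * (E + μ / u)) (2 * (μ * (-(‖x‖ ^ 2)⁻¹))) ‖x‖ := by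
      simp only [div_eq_mul_inv]
      exact (((hasDerivAt_inv hx0).const_mul μ).const_add E).const_mul 2
    exact (h1.log hE).const_mul _
  rw [hasGradientAt_iff_hasFDerivAt]
  convert! hlog.comp_hasFDerivAt x hnorm using 1
  ext y
  simp only [map_smul, smul_apply, InnerProductSpace.toDual_apply_apply,
    innerSL_apply_apply, smul_eq_mul]
  field_simp

/-- Kepler solutions become geodesics of the Kepler Jacobi metric after
reparameterization. Let `r : I → ℝ³` be a Kepler solution with energy `E`
(`½‖r'‖² − μ/‖r‖ = E`) and `r'(t) ≠ 0` on `I`. With the Jacobi arc length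
`σ(t) = ∫_{t₀}^{t} 2(E + μ/‖r(τ)‖) dτ` and `γ = r ∘ σ⁻¹` (encoded by `γ(σ t) = r t`),
`γ` takes values in the Hill region `Ω`, has unit Jacobi speed, and satisfies the
conformal geodesic equation for `φ(x) = ½ log(2(E + μ/‖x‖))`. -/
theorem kepler_to_jacobi_geodesic
    (μ : ℝ) (hμ : 0 < μ) (E : ℝ)
    (t₁ t₂ : ℝ) (t₀ : ℝ) (ht₀ : t₀ ∈ Ioo t₁ t₂)
    (r : ℝ → EuclideanSpace ℝ (Fin 3))
    (hr₁ : ∀ t ∈ Ioo t₁ t₂, DifferentiableAt ℝ r t)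
    (hr₂ : ∀ t ∈ Ioo t₁ t₂, DifferentiableAt ℝ (deriv r) t)
    (hne : ∀ t ∈ Ioo t₁ t₂, r t ≠ 0)
    (hode : ∀ t ∈ Ioo t₁ t₂, deriv (deriv r) t = -(μ / ‖r t‖ ^ 3) • r t)
    (henergy : ∀ t ∈ Ioo t₁ t₂, (1/2) * ‖deriv r t‖ ^ 2 - μ / ‖r t‖ = E)
    (hr' : ∀ t ∈ Ioo t₁ t₂, deriv r t ≠ 0)
    -- conformal factor of the Kepler Jacobi metric
    (φ : EuclideanSpace ℝ (Fin 3) → ℝ)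
    (hφ : ∀ x, φ x = (1/2) * Real.log (2 * (E + μ / ‖x‖)))
    -- Jacobi arc length
    (σ : ℝ → ℝ)
    (hσ : ∀ t, σ t = ∫ τ in t₀..t, 2 * (E + μ / ‖r τ‖))
    -- γ = r ∘ σ⁻¹
    (γ : ℝ → EuclideanSpace ℝ (Fin 3))
    (hγ : ∀ t ∈ Ioo t₁ t₂, γ (σ t) = r t) :
    ∀ t ∈ Ioo t₁ t₂,
      (γ (σ t) ≠ 0 ∧ 0 < E + μ / ‖γ (σ t)‖) ∧
      2 * (E + μ / ‖γ (σ t)‖) * ‖deriv γ (σ t)‖ ^ 2 = 1 ∧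
      deriv (deriv γ) (σ t)
        = ‖deriv γ (σ t)‖ ^ 2 • gradient φ (γ (σ t))
          - (2 * ⟪gradient φ (γ (σ t)), deriv γ (σ t)⟫) • deriv γ (σ t) := by
  set v := deriv r with hv
  have hEv : ∀ t ∈ Ioo t₁ t₂, 2 * (E + μ / ‖r t‖) = ‖v t‖ ^ 2 := fun t ht => by
    linarith [henergy t ht]
  have hv0 : ∀ t ∈ Ioo t₁ t₂, ‖v t‖ ^ 2 ≠ 0 := fun t ht =>
    pow_ne_zero 2 (norm_ne_zero_iff.2 (hr' t ht))
  have hcont : ContinuousOn (fun τ => 2 * (E + μ / ‖r τ‖)) (Ioo t₁ t₂) := by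
    have hrc : ContinuousOn r (Ioo t₁ t₂) := fun t ht =>
      (hr₁ t ht).continuousAt.continuousWithinAt
    exact continuousOn_const.mul (continuousOn_const.add
      (continuousOn_const.div hrc.norm fun t ht => norm_ne_zero_iff.2 (hne t ht)))
  have hσ' : ∀ t ∈ Ioo t₁ t₂, HasStrictDerivAt σ (‖v t‖ ^ 2) t := by
    intro t ht
    rw [funext hσ, ← hEv t ht]
    refine intervalIntegral.integral_hasStrictDerivAt_right ?_
      (hcont.stronglyMeasurableAtFilter isOpen_Ioo t ht) (hcont.continuousAt (Ioo_mem_nhds ht.1 ht.2))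
    exact (hcont.mono (ordConnected_Ioo.uIcc_subset ht₀ ht)).intervalIntegrable
  have hγ' : ∀ t ∈ Ioo t₁ t₂, HasDerivAt γ ((‖v t‖ ^ 2)⁻¹ • v t) (σ t) := fun t ht =>
    hasDerivAt_of_comp_eventuallyEq (hσ' t ht) (hv0 t ht) (hr₁ t ht).hasDerivAt
      (eventually_of_mem (Ioo_mem_nhds ht.1 ht.2) hγ)
  intro t ht
  have hvt := hv0 t ht
  have hvn : ‖v t‖ ≠ 0 := norm_ne_zero_iff.2 (hr' t ht)
  have hvv : HasDerivAt v (deriv v t) t := (hr₂ t ht).hasDerivAt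
  have hγ'' := hasDerivAt_of_comp_eventuallyEq (γ := deriv γ) (hσ' t ht) hvt
    ((hvv.norm_sq.fun_inv hvt).fun_smul hvv)
    (eventually_of_mem (Ioo_mem_nhds ht.1 ht.2) fun s hs => (hγ' s hs).deriv)
  have hgrad : gradient φ (r t) = (‖v t‖ ^ 2)⁻¹ • deriv v t := by
    have h := (hasGradientAt_jacobi_exponent μ E (hne t ht) (by rwa [hEv t ht])).gradient
    rwa [← funext hφ, hEv t ht, ← hode t ht] at h
  have hspeed : ‖(‖v t‖ ^ 2)⁻¹ • v t‖ ^ 2 = (‖v t‖ ^ 2)⁻¹ := by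
    rw [norm_smul, norm_inv, norm_pow, norm_norm]
    field_simp
  rw [hγ t ht, (hγ' t ht).deriv, hγ''.deriv, hgrad, hspeed, hEv t ht]
  refine ⟨⟨hne t ht, ?_⟩, mul_inv_cancel₀ hvt, ?_⟩
  · have : 0 < ‖v t‖ ^ 2 := by positivity
    linarith [hEv t ht]
  · rw [real_inner_smul_left, real_inner_smul_right, real_inner_comm]
    match_scalars <;> field_simp
end

section
/- Theorem (Jacobi/Maupertuis, converse direction for Kepler): let γ : J → Ω be a C² curve satisfying the conformal geodesic equation γ''(s) = ‖γ'(s)‖² ∇φ(γ(s)) − 2 ⟨∇φ(γ(s)), γ'(s)⟩ γ'(s), normalized to unit Jacobi speed: 2(E + μ/‖γ(s)‖) ‖γ'(s)‖² = 1 for all s ∈ J. Define t(s) = ∫_{s₀}^{s} 1/(2(E + μ/‖γ(σ)‖)) dσ and let r = γ ∘ t⁻¹. Then r is a Kepler solution, r''(t) = −μ r(t)/‖r(t)‖³, with constant specific energy ½‖r'(t)‖² − μ/‖r(t)‖ = E. -/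
open Set RealInnerProductSpace

/-!
Write `W x = E + μ/‖x‖`, so that `φ = ½ log (2W)`, `∇φ = ∇W / (2W)` and `dt/ds = 1/(2W) > 0`.
The inverse function theorem turns `r (t s) = g s` into `r' (t s) = (dt/ds)⁻¹ g' s`
(`hasDerivAt_of_comp_eq`). Applied to `g = γ` this gives `r' = 2W γ'`, and unit Jacobi speed then
reads `‖r'‖² = 2W`, which is conservation of energy. Applied to `r'` and `g = 2W γ'` it gives
`r'' = 2W (2 ⟪∇W, γ'⟫ γ' + 2W γ'')`. In the geodesic equation the term `-2 ⟪∇φ, γ'⟫ γ'` cancels the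
first summand, and what is left is `2W ∇φ = ∇W = -μ x/‖x‖³`.
-/

/-- Differentiation of `g ∘ t⁻¹`, where `t` has positive continuous derivative `f` on the interval
and `r` represents `g ∘ t⁻¹` through the identity `r (t s) = g s`. -/
lemma hasDerivAt_of_comp_eq_s15 {F : Type*} [NormedAddCommGroup F] [NormedSpace ℝ F]
    {s₁ s₂ : ℝ} {t f : ℝ → ℝ} {g r : ℝ → F} {g' : F}
    (ht : ∀ s ∈ Ioo s₁ s₂, HasDerivAt t (f s) s) (hf : ContinuousOn f (Ioo s₁ s₂))
    (hpos : ∀ s ∈ Ioo s₁ s₂, 0 < f s) (hr : ∀ s ∈ Ioo s₁ s₂, r (t s) = g s)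
    {s : ℝ} (hs : s ∈ Ioo s₁ s₂) (hg : HasDerivAt g g' s) :
    HasDerivAt r ((f s)⁻¹ • g') (t s) := by
  have hJ : Ioo s₁ s₂ ∈ nhds s := isOpen_Ioo.mem_nhds hs
  have hst : HasStrictDerivAt t (f s) s :=
    hasStrictDerivAt_of_hasDerivAt_of_continuousAt
      (Filter.eventually_of_mem hJ ht) (hf.continuousAt hJ)
  have hf0 := (hpos s hs).ne'
  have hL := hst.to_localInverse hf0
  have hLs : hst.localInverse t (f s) s hf0 (t s) = s :=
    (hst.hasStrictFDerivAt_equiv hf0).localInverse_apply_image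
  have hright := (hst.hasStrictFDerivAt_equiv hf0).eventually_right_inverse
  have hmem : ∀ᶠ y in nhds (t s), hst.localInverse t (f s) s hf0 y ∈ Ioo s₁ s₂ :=
    hL.hasDerivAt.continuousAt.eventually (by rw [hLs]; exact hJ)
  have hcomp : HasDerivAt (g ∘ hst.localInverse t (f s) s hf0) ((f s)⁻¹ • g') (t s) :=
    HasDerivAt.scomp (t s) (by rw [hLs]; exact hg) hL.hasDerivAt
  refine hcomp.congr_of_eventuallyEq ?_
  filter_upwards [hright, hmem] with y hy hyJ
  have h1 := hr _ hyJ
  rw [Function.comp_apply, ← h1]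
  congr 1
  exact hy.symm

/-- The Kepler force: the gradient of `E + μ/‖x‖` is `-μ x/‖x‖³`. -/
lemma hasFDerivAt_kepler (μ E : ℝ) {x : EuclideanSpace ℝ (Fin 3)} (hx : x ≠ 0) :
    HasFDerivAt (fun y : EuclideanSpace ℝ (Fin 3) => E + μ / ‖y‖)
      (-(μ / ‖x‖ ^ 3) • innerSL ℝ x) x := by
  have hn : ‖x‖ ≠ 0 := norm_ne_zero_iff.mpr hx
  have h1 : HasFDerivAt (fun y : EuclideanSpace ℝ (Fin 3) => ‖y‖ ^ 2) (2 • innerSL ℝ x) x :=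
    (hasStrictFDerivAt_norm_sq x).hasFDerivAt
  have h2 : HasDerivAt (fun u : ℝ => E + μ / √u) (-(μ / (2 * ‖x‖ ^ 3))) (‖x‖ ^ 2) := by
    have h3 := ((Real.hasDerivAt_sqrt (pow_ne_zero 2 hn)).inv
      (by rw [Real.sqrt_sq (norm_nonneg x)]; exact hn)).const_mul μ |>.const_add E
    rw [Real.sqrt_sq (norm_nonneg x)] at h3
    refine (h3.congr_deriv ?_).congr_of_eventuallyEq (.of_forall fun u => ?_)
    · field_simp
    · simp [div_eq_mul_inv]
  have h4 := h2.comp_hasFDerivAt x h1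
  refine (h4.congr_fderiv ?_).congr_of_eventuallyEq (.of_forall fun y => ?_)
  · ext y
    simp
    field_simp
  · simp [Real.sqrt_sq]

/-- `∇φ = ∇W / (2W)` for `φ = ½ log (2W)` and `W = E + μ/‖x‖`. -/
lemma gradient_jacobi (μ E : ℝ) {φ : EuclideanSpace ℝ (Fin 3) → ℝ}
    (hφ : ∀ x, φ x = (1/2) * Real.log (2 * (E + μ / ‖x‖)))
    {x : EuclideanSpace ℝ (Fin 3)} (hx : x ≠ 0) (hW : 0 < E + μ / ‖x‖) :
    gradient φ x = (2 * (E + μ / ‖x‖))⁻¹ • (-(μ / ‖x‖ ^ 3) • x) := by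
  apply HasGradientAt.gradient
  rw [hasGradientAt_iff_hasFDerivAt]
  have h := (((hasFDerivAt_kepler μ E hx).const_mul 2).log (by positivity)).const_mul (1/2)
  refine (h.congr_fderiv ?_).congr_of_eventuallyEq (.of_forall fun y => hφ y)
  ext y
  simp
  field_simp

/-- Jacobi/Maupertuis, converse direction for Kepler: let `γ : J → Ω` be a
C² curve satisfying the conformal geodesic equation for `φ(x) = ½ log(2(E + μ/‖x‖))`,
normalized to unit Jacobi speed `2(E + μ/‖γ‖)‖γ'‖² = 1` on `J`. With
`t(s) = ∫_{s₀}^{s} 1/(2(E + μ/‖γ(σ)‖)) dσ` and `r = γ ∘ t⁻¹` (encoded by `r(t(s)) = γ s`),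
`r` is a Kepler solution `r'' = −μ r/‖r‖³` with constant specific energy
`½‖r'‖² − μ/‖r‖ = E`. -/
theorem jacobi_geodesic_to_kepler
    (μ : ℝ) (hμ : 0 < μ) (E : ℝ)
    (s₁ s₂ : ℝ) (s₀ : ℝ) (hs₀ : s₀ ∈ Ioo s₁ s₂)
    (φ : EuclideanSpace ℝ (Fin 3) → ℝ)
    (hφ : ∀ x, φ x = (1/2) * Real.log (2 * (E + μ / ‖x‖)))
    (γ : ℝ → EuclideanSpace ℝ (Fin 3))
    (hγ₁ : ∀ s ∈ Ioo s₁ s₂, DifferentiableAt ℝ γ s)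
    (hγ₂ : ∀ s ∈ Ioo s₁ s₂, DifferentiableAt ℝ (deriv γ) s)
    -- γ takes values in the Hill region Ω
    (hΩ : ∀ s ∈ Ioo s₁ s₂, γ s ≠ 0 ∧ 0 < E + μ / ‖γ s‖)
    -- conformal geodesic equation
    (hgeo : ∀ s ∈ Ioo s₁ s₂,
        deriv (deriv γ) s
          = ‖deriv γ s‖ ^ 2 • gradient φ (γ s)
            - (2 * ⟪gradient φ (γ s), deriv γ s⟫) • deriv γ s)
    -- unit Jacobi speed
    (hspeed : ∀ s ∈ Ioo s₁ s₂, 2 * (E + μ / ‖γ s‖) * ‖deriv γ s‖ ^ 2 = 1)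
    -- physical time as a function of arc length
    (tfun : ℝ → ℝ)
    (htfun : ∀ s, tfun s = ∫ σ in s₀..s, 1 / (2 * (E + μ / ‖γ σ‖)))
    -- r = γ ∘ t⁻¹
    (r : ℝ → EuclideanSpace ℝ (Fin 3))
    (hr : ∀ s ∈ Ioo s₁ s₂, r (tfun s) = γ s) :
    ∀ s ∈ Ioo s₁ s₂,
      r (tfun s) ≠ 0 ∧
      deriv (deriv r) (tfun s) = -(μ / ‖r (tfun s)‖ ^ 3) • r (tfun s) ∧
      (1/2) * ‖deriv r (tfun s)‖ ^ 2 - μ / ‖r (tfun s)‖ = E := by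
  have hcont : ContinuousOn (fun σ => 1 / (2 * (E + μ / ‖γ σ‖))) (Ioo s₁ s₂) := by
    have hγc : ContinuousOn γ (Ioo s₁ s₂) :=
      fun s hs => (hγ₁ s hs).continuousAt.continuousWithinAt
    refine continuousOn_const.div (continuousOn_const.mul (continuousOn_const.add
      (continuousOn_const.div hγc.norm fun s hs => norm_ne_zero_iff.mpr (hΩ s hs).1))) ?_
    intro s hs
    have := (hΩ s hs).2
    positivity
  have hpos : ∀ s ∈ Ioo s₁ s₂, 0 < 1 / (2 * (E + μ / ‖γ s‖)) := by
    intro s hs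
    have := (hΩ s hs).2
    positivity
  have ht : ∀ s ∈ Ioo s₁ s₂, HasDerivAt tfun (1 / (2 * (E + μ / ‖γ s‖))) s := by
    intro s hs
    rw [show tfun = fun s => ∫ σ in s₀..s, 1 / (2 * (E + μ / ‖γ σ‖)) from funext htfun]
    refine intervalIntegral.integral_hasDerivAt_right ?_
      (hcont.stronglyMeasurableAtFilter isOpen_Ioo s hs)
      (hcont.continuousAt (isOpen_Ioo.mem_nhds hs))
    exact (hcont.mono (ordConnected_Ioo.uIcc_subset hs₀ hs)).intervalIntegrable
  have hr' : ∀ s ∈ Ioo s₁ s₂,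
      deriv r (tfun s) = (2 * (E + μ / ‖γ s‖)) • deriv γ s := by
    intro s hs
    have h := (hasDerivAt_of_comp_eq_s15 ht hcont hpos hr hs (hγ₁ s hs).hasDerivAt).deriv
    simpa only [one_div, inv_inv] using h
  intro s hs
  obtain ⟨hx, hW⟩ := hΩ s hs
  have hsp := hspeed s hs
  rw [hr s hs]
  refine ⟨hx, ?_, ?_⟩
  · have hWd := ((hasFDerivAt_kepler μ E hx).comp_hasDerivAt s
      (hγ₁ s hs).hasDerivAt).const_mul 2
    have h := (hasDerivAt_of_comp_eq_s15 ht hcont hpos hr' hs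
      (hWd.smul (hγ₂ s hs).hasDerivAt)).deriv
    rw [h, hgeo s hs, gradient_jacobi μ E hφ hx hW]
    simp only [one_div, inv_inv, _root_.smul_apply, innerSL_apply_apply,
      real_inner_smul_left, smul_eq_mul, Function.comp_apply]
    set W := E + μ / ‖γ s‖
    set k := μ / ‖γ s‖ ^ 3
    match_scalars
    · field_simp
      linear_combination (-k) * hsp
    · field_simp
      ring
  · rw [hr' s hs, norm_smul, mul_pow, Real.norm_eq_abs, sq_abs]
    linear_combination (E + μ / ‖γ s‖) * hsp
end

section
/- Geodesics of the Kepler Jacobi metric lie on conics with a focus at the origin: let γ : J → Ω be a C² curve satisfying the conformal geodesic equation γ''(s) = ‖γ'(s)‖² ∇φ(γ(s)) − 2 ⟨∇φ(γ(s)), γ'(s)⟩ γ'(s), normalized to unit Jacobi speed: 2(E + μ/‖γ(s)‖) ‖γ'(s)‖² = 1 for all s ∈ J. Then there exist a constant vector A ∈ ℝ³ and a constant c ≥ 0 such that A · γ(s) + μ ‖γ(s)‖ = c for all s ∈ J. -/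
open Set RealInnerProductSpace

/-!
Write `r = ‖γ‖`, `W = e^{2φ} = 2 (E + μ / r)` and `v = γ'`. The vector `p = W v` is the velocity
of the Kepler orbit in Newtonian time `dt = ds / W`: since `W' = 2 ⟪∇φ, v⟫ W` and `W ‖v‖² = 1`, the
geodesic equation becomes `p' = ∇φ = -μ / (r³ W) γ`. The eccentricity (Laplace–Runge–Lenz) vector
and the squared angular momentum are therefore conserved. In terms of `p`, with `‖p‖² = W`, they
are `A = (W - μ / r) γ - ⟪p, γ⟫ p` and `W r² - ⟪p, γ⟫²`, and the identity
`⟪A, γ⟫ + μ r = W r² - ⟪p, γ⟫²` is the equation of the conic. The right-hand side is nonnegative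
by Cauchy–Schwarz.
-/

section Kepler

variable {F : Type*} [NormedAddCommGroup F] [InnerProductSpace ℝ F]

lemma hasFDerivAt_norm_of_ne_zero {x : F} (hx : x ≠ 0) :
    HasFDerivAt (fun y : F => ‖y‖) (‖x‖⁻¹ • innerSL ℝ x) x := by
  have hr : ‖x‖ ≠ 0 := norm_ne_zero_iff.mpr hx
  have h := (hasStrictFDerivAt_norm_sq x).hasFDerivAt.sqrt (pow_ne_zero 2 hr)
  have e : (fun y : F => √(‖y‖ ^ 2)) = fun y => ‖y‖ := by
    funext y
    exact Real.sqrt_sq (norm_nonneg y)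
  rw [e, Real.sqrt_sq (norm_nonneg x)] at h
  refine h.congr_fderiv ?_
  ext y
  simp
  field_simp

lemma gradient_jacobi_exponent [CompleteSpace F] {μ E : ℝ} {φ : F → ℝ}
    (hφ : ∀ x, φ x = (1 / 2) * Real.log (2 * (E + μ / ‖x‖))) {x : F} (hx : x ≠ 0)
    (hW : 0 < E + μ / ‖x‖) :
    gradient φ x = (-(μ / (‖x‖ ^ 3 * (2 * (E + μ / ‖x‖))))) • x := by
  have hr : ‖x‖ ≠ 0 := norm_ne_zero_iff.mpr hx
  have hW' : (2 * (E + μ / ‖x‖)) ≠ 0 := by positivity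
  have hd : HasDerivAt (fun r : ℝ => (1 / 2) * Real.log (2 * (E + μ / r)))
      (-(μ / (‖x‖ ^ 2 * (2 * (E + μ / ‖x‖))))) ‖x‖ := by
    have h := ((((((hasDerivAt_id ‖x‖).fun_inv hr).const_mul μ).const_add E).const_mul 2).log
      hW').const_mul (1 / 2)
    refine h.congr_deriv ?_
    simp only [id, div_eq_mul_inv] at hW' ⊢
    generalize (2 * (E + μ * ‖x‖⁻¹)) = W at hW' ⊢
    field_simp
  have h := hd.comp_hasFDerivAt x (hasFDerivAt_norm_of_ne_zero hx)
  have e : φ = (fun r : ℝ => (1 / 2) * Real.log (2 * (E + μ / r))) ∘ fun y : F => ‖y‖ :=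
    funext hφ
  rw [← e] at h
  refine HasGradientAt.gradient (hasGradientAt_iff_hasFDerivAt.mpr (h.congr_fderiv ?_))
  generalize (2 * (E + μ / ‖x‖)) = W at hW' ⊢
  ext y
  simp
  field_simp

end Kepler

/-- Geodesics of the Kepler Jacobi metric lie on conics with a focus at the
origin. Let `γ : J → Ω` be a C² curve satisfying the conformal geodesic equation for
`φ(x) = ½ log(2(E + μ/‖x‖))`, normalized to unit Jacobi speed. Then there exist a
constant vector `A ∈ ℝ³` and a constant `c ≥ 0` such that
`A · γ(s) + μ ‖γ(s)‖ = c` for all `s ∈ J`. -/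
theorem jacobi_geodesic_on_conic
    (μ : ℝ) (hμ : 0 < μ) (E : ℝ)
    (s₁ s₂ : ℝ)
    (φ : EuclideanSpace ℝ (Fin 3) → ℝ)
    (hφ : ∀ x, φ x = (1/2) * Real.log (2 * (E + μ / ‖x‖)))
    (γ : ℝ → EuclideanSpace ℝ (Fin 3))
    (hγ₁ : ∀ s ∈ Ioo s₁ s₂, DifferentiableAt ℝ γ s)
    (hγ₂ : ∀ s ∈ Ioo s₁ s₂, DifferentiableAt ℝ (deriv γ) s)
    -- γ takes values in the Hill region Ω
    (hΩ : ∀ s ∈ Ioo s₁ s₂, γ s ≠ 0 ∧ 0 < E + μ / ‖γ s‖)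
    -- conformal geodesic equation
    (hgeo : ∀ s ∈ Ioo s₁ s₂,
        deriv (deriv γ) s
          = ‖deriv γ s‖ ^ 2 • gradient φ (γ s)
            - (2 * ⟪gradient φ (γ s), deriv γ s⟫) • deriv γ s)
    -- unit Jacobi speed
    (hspeed : ∀ s ∈ Ioo s₁ s₂, 2 * (E + μ / ‖γ s‖) * ‖deriv γ s‖ ^ 2 = 1) :
    ∃ (A : EuclideanSpace ℝ (Fin 3)) (c : ℝ), 0 ≤ c ∧
      ∀ s ∈ Ioo s₁ s₂, ⟪A, γ s⟫ + μ * ‖γ s‖ = c := by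
  set W : ℝ → ℝ := fun s => 2 * (E + μ / ‖γ s‖) with hWdef
  set b : ℝ → ℝ := fun s => W s * ⟪deriv γ s, γ s⟫ with hbdef
  set A : ℝ → EuclideanSpace ℝ (Fin 3) :=
    fun s => (W s - μ / ‖γ s‖) • γ s - b s • (W s • deriv γ s) with hAdef
  set c : ℝ → ℝ := fun s => W s * ‖γ s‖ ^ 2 - b s ^ 2 with hcdef
  have key : ∀ s ∈ Ioo s₁ s₂, HasDerivAt A 0 s ∧ HasDerivAt c 0 s := by
    intro s hs
    obtain ⟨h0, hpos⟩ := hΩ s hs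
    have hr : ‖γ s‖ ≠ 0 := norm_ne_zero_iff.mpr h0
    have hW0 : W s ≠ 0 := by simp only [hWdef]; positivity
    have hv := (hγ₁ s hs).hasDerivAt
    have ha := (hγ₂ s hs).hasDerivAt
    have hsp : W s * ‖deriv γ s‖ ^ 2 = 1 := hspeed s hs
    have hgrad : gradient φ (γ s) = (-(μ / (‖γ s‖ ^ 3 * W s))) • γ s :=
      gradient_jacobi_exponent hφ h0 hpos
    have hnorm : HasDerivAt (fun t => ‖γ t‖) (⟪deriv γ s, γ s⟫ / ‖γ s‖) s := by
      refine ((hasFDerivAt_norm_of_ne_zero h0).comp_hasDerivAt s hv).congr_deriv ?_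
      simp [real_inner_comm, div_eq_inv_mul]
    have hpot : HasDerivAt (fun t => μ / ‖γ t‖) (-(μ * ⟪deriv γ s, γ s⟫ / ‖γ s‖ ^ 3)) s := by
      refine ((hnorm.fun_inv hr).const_mul μ).congr_deriv ?_
      field_simp
    have hW : HasDerivAt W (-(2 * μ * ⟪deriv γ s, γ s⟫ / ‖γ s‖ ^ 3)) s := by
      refine ((hpot.const_add E).const_mul 2).congr_deriv ?_
      ring
    -- The geodesic equation in Newtonian form.
    have hp : HasDerivAt (fun t => W t • deriv γ t) ((-(μ / (‖γ s‖ ^ 3 * W s))) • γ s) s := by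
      refine (hW.fun_smul ha).congr_deriv ?_
      rw [hgeo s hs, hgrad, real_inner_smul_left, real_inner_comm (deriv γ s) (γ s)]
      have hn : ‖deriv γ s‖ ^ 2 = 1 / W s := by field_simp; linarith
      rw [hn]
      match_scalars <;> field_simp <;> ring
    have hb : HasDerivAt b (1 - μ / (‖γ s‖ * W s)) s := by
      have h := hp.inner ℝ hv
      have e : (fun t => ⟪W t • deriv γ t, γ t⟫) = b := by
        funext t
        simp only [hbdef, real_inner_smul_left]
      rw [e] at h
      refine h.congr_deriv ?_
      rw [real_inner_smul_left, real_inner_smul_left, real_inner_self_eq_norm_sq,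
        real_inner_self_eq_norm_sq, hsp]
      field_simp
      ring
    constructor
    · refine (((hW.fun_sub hpot).fun_smul hv).fun_sub (hb.fun_smul hp)).congr_deriv ?_
      have hbs : b s = W s * ⟪deriv γ s, γ s⟫ := rfl
      rw [hbs]
      match_scalars <;> field_simp <;> ring
    · refine ((hW.fun_mul (hnorm.fun_pow 2)).fun_sub (hb.fun_pow 2)).congr_deriv ?_
      have hbs : b s = W s * ⟪deriv γ s, γ s⟫ := rfl
      rw [hbs]
      field_simp
      ring
  rcases (Ioo s₁ s₂).eq_empty_or_nonempty with he | ⟨s₀, hs₀⟩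
  · exact ⟨0, 0, le_rfl, fun s hs => by simp [he] at hs⟩
  have hA : ∀ s ∈ Ioo s₁ s₂, A s = A s₀ := fun s hs =>
    isOpen_Ioo.is_const_of_deriv_eq_zero isPreconnected_Ioo
      (fun t ht => (key t ht).1.differentiableAt.differentiableWithinAt)
      (fun t ht => (key t ht).1.deriv) hs hs₀
  have hc : ∀ s ∈ Ioo s₁ s₂, c s = c s₀ := fun s hs =>
    isOpen_Ioo.is_const_of_deriv_eq_zero isPreconnected_Ioo
      (fun t ht => (key t ht).2.differentiableAt.differentiableWithinAt)
      (fun t ht => (key t ht).2.deriv) hs hs₀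
  refine ⟨A s₀, c s₀, ?_, fun s hs => ?_⟩
  · have hCS : ⟪deriv γ s₀, γ s₀⟫ ^ 2 ≤ ‖deriv γ s₀‖ ^ 2 * ‖γ s₀‖ ^ 2 := by
      rw [← mul_pow]
      exact sq_le_sq.mpr ((abs_real_inner_le_norm _ _).trans (le_abs_self _))
    have hsp : W s₀ * ‖deriv γ s₀‖ ^ 2 = 1 := hspeed s₀ hs₀
    have h := mul_le_mul_of_nonneg_left hCS (sq_nonneg (W s₀))
    have e : W s₀ ^ 2 * (‖deriv γ s₀‖ ^ 2 * ‖γ s₀‖ ^ 2) = W s₀ * ‖γ s₀‖ ^ 2 := by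
      linear_combination W s₀ * ‖γ s₀‖ ^ 2 * hsp
    simp only [hcdef, hbdef, mul_pow]
    linarith
  · rw [← hA s hs, ← hc s hs]
    have hr : ‖γ s‖ ≠ 0 := norm_ne_zero_iff.mpr (hΩ s hs).1
    have hbs : b s = W s * ⟪deriv γ s, γ s⟫ := rfl
    simp only [hAdef, hcdef, inner_sub_left, real_inner_smul_left, real_inner_self_eq_norm_sq, hbs]
    field_simp
    ring
end
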